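/- arXiv:1811.11899 — 2 statements merged into one kernel-verified Lean document; each statement's English description precedes it below -/
import Mathlib

section
/- Let π ∈ ℝⁿ. (a) If F(Λ₋(π)) = 0, then λ⁻¹π ∈ C₀ for every λ > 0, and: if cπ = 0 then λ·ψ(π/λ) converges, as λ → 0⁺, to ∫_{|u|≤1} ⟨π,u⟩ F(du) − ⟨π,b⟩ (this value is well defined in (−∞,+∞], since ⟨π,u⟩ ≥ 0 for F-a.e. u); if cπ ≠ 0 then λ·ψ(π/λ) → +∞ as λ → 0⁺. (b) If F(Λ₋(π)) > 0, then there exists λ₀ > 0 such that π/λ ∉ C₀, hence ψ(π/λ) = +∞, for all 0 < λ ≤ λ₀; in particular λ·ψ(π/λ) → +∞ as λ → 0⁺. -/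
open MeasureTheory
open scoped RealInnerProductSpace ENNReal Topology

/-- The extended-real-valued convex function `ψ` from the paper: on the budget-constraint set
`C₀ = {π | F {u | 1 + ⟨π,u⟩ < 0} = 0}` it equals
`−⟨π,b⟩ − ((p−1)/2)⟨π,cπ⟩ − ∫ (p⁻¹((1+⟨π,u⟩)₊)^p − p⁻¹ − ⟨π,u⟩·1_{|u|≤1}) dF`,
and `+∞` outside of `C₀`. -/
noncomputable def psi (n : ℕ) (p : ℝ) (F : Measure (EuclideanSpace ℝ (Fin n)))
    (b : EuclideanSpace ℝ (Fin n))
    (c : EuclideanSpace ℝ (Fin n) →ₗ[ℝ] EuclideanSpace ℝ (Fin n))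
    (π : EuclideanSpace ℝ (Fin n)) : EReal :=
  if F {u : EuclideanSpace ℝ (Fin n) | 1 + ⟪π, u⟫ < 0} = 0 then
    (((-⟪π, b⟫) - ((p - 1) / 2) * ⟪π, c π⟫ -
      ∫ u, (p⁻¹ * (max (1 + ⟪π, u⟫) 0) ^ p - p⁻¹ -
        Set.indicator {u : EuclideanSpace ℝ (Fin n) | ‖u‖ ≤ 1}
          (fun u => ⟪π, u⟫) u) ∂F : ℝ) : EReal)
  else (⊤ : EReal)

/-!
Put `x = ⟪π, u⟫` and let `g t = ((1 + t)₊ ^ p - 1) / p` be the gain of power utility. If `x ≥ 0` for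
`F`-almost every `u`, then
`l * ψ (π / l) = ∫_{‖u‖ ≤ 1} (x - l * g (x / l)) - ∫_{‖u‖ > 1} l * g (x / l) - ⟪π, b⟫
  + (1 - p) / (2 * l) * ⟪π, c π⟫`.
Since `g` grows sublinearly, `l * g (x / l) → 0` as `l → 0⁺`. The integrand over the small jumps
lies below its limit `x`, so Fatou's lemma handles the first integral even if the limit is infinite,
and the second is dominated by a multiple of `∫_{‖u‖ > 1} ‖u‖ ^ p`. The quadratic term explodes
unless `c π = 0`. If instead `x < 0` with positive measure, then already `x < -l` with positive
measure for all small `l`, which puts `π / l` outside the budget set.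
-/

open Filter

theorem one_add_mul_one_sub_le_rpow {p t : ℝ} (hp0 : 0 ≤ p) (hp1 : p ≤ 1) (ht : -1 < t) :
    (1 + t) * (1 - (1 - p) * t) ≤ (1 + t) ^ p := by
  have base_pos : 0 < 1 + t := by linarith
  have bernoulli : (1 + t) ^ (1 - p) ≤ 1 + (1 - p) * t :=
    rpow_one_add_le_one_add_mul_self ht.le (by linarith) (by linarith)
  have rpow_mul_rpow : (1 + t) ^ p * (1 + t) ^ (1 - p) = 1 + t := by
    rw [← Real.rpow_add base_pos, add_sub_cancel, Real.rpow_one]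
  have denom_pos : 0 < 1 + (1 - p) * t := (Real.rpow_pos_of_pos base_pos _).trans_le bernoulli
  refine le_of_mul_le_mul_right ?_ denom_pos
  calc (1 + t) * (1 - (1 - p) * t) * (1 + (1 - p) * t)
      = (1 + t) - (1 + t) * ((1 - p) * t) ^ 2 := by ring
    _ ≤ (1 + t) ^ p * (1 + t) ^ (1 - p) := by
        rw [rpow_mul_rpow]
        exact sub_le_self _ (by positivity)
    _ ≤ (1 + t) ^ p * (1 + (1 - p) * t) := by gcongr

section PowerGain

/-- The increment `U (1 + t) - U 1` of the power utility `U y = y₊ ^ p / p`, for `p ≠ 0`: the jump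
integrand of `psi` without its compensator. -/
noncomputable def powerGain (p t : ℝ) : ℝ := p⁻¹ * max (1 + t) 0 ^ p - p⁻¹

/-- The perspective `l * powerGain p (x / l)` of the power-utility gain, for `l ≠ 0`; as `l → 0⁺` it
tends to the recession function of the gain. -/
noncomputable def perspectiveGain (p l x : ℝ) : ℝ := l * powerGain p (l⁻¹ * x)

variable {p l t x : ℝ}

theorem powerGain_of_neg_one_le (ht : -1 ≤ t) : powerGain p t = p⁻¹ * (1 + t) ^ p - p⁻¹ := by
  rw [powerGain, max_eq_left (by linarith)]

theorem powerGain_nonneg (hp : 0 ≤ p) (ht : 0 ≤ t) : 0 ≤ powerGain p t := by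
  rw [powerGain_of_neg_one_le (by linarith)]
  exact sub_nonneg.2 (le_mul_of_one_le_right (inv_nonneg.2 hp)
    (Real.one_le_rpow (by linarith) hp))

theorem powerGain_le_self (hp0 : 0 < p) (hp1 : p ≤ 1) (ht : -1 ≤ t) : powerGain p t ≤ t := by
  rw [powerGain_of_neg_one_le ht]
  calc p⁻¹ * (1 + t) ^ p - p⁻¹ ≤ p⁻¹ * (1 + p * t) - p⁻¹ := by
        gcongr
        exact rpow_one_add_le_one_add_mul_self ht hp0.le hp1
    _ = t := by field_simp; ring

theorem powerGain_le_rpow (hp0 : 0 ≤ p) (hp1 : p ≤ 1) (ht : 0 ≤ t) :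
    powerGain p t ≤ p⁻¹ * t ^ p := by
  rw [powerGain_of_neg_one_le (by linarith)]
  calc p⁻¹ * (1 + t) ^ p - p⁻¹ ≤ p⁻¹ * (1 ^ p + t ^ p) - p⁻¹ := by
        gcongr
        exact Real.rpow_add_le_add_rpow zero_le_one ht hp0 hp1
    _ = p⁻¹ * t ^ p := by rw [Real.one_rpow]; ring

theorem self_sub_powerGain_le_sq (hp0 : 0 < p) (hp1 : p ≤ 1) (ht : -1 < t) :
    t - powerGain p t ≤ p⁻¹ * (1 - p) * t ^ 2 := by
  rw [powerGain_of_neg_one_le ht.le]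
  calc t - (p⁻¹ * (1 + t) ^ p - p⁻¹)
      ≤ t - (p⁻¹ * ((1 + t) * (1 - (1 - p) * t)) - p⁻¹) := by
        gcongr
        exact one_add_mul_one_sub_le_rpow hp0.le hp1 ht
    _ = p⁻¹ * (1 - p) * t ^ 2 := by field_simp; ring

theorem measurable_perspectiveGain (p l : ℝ) : Measurable (perspectiveGain p l) := by
  unfold perspectiveGain powerGain
  fun_prop

theorem perspectiveGain_nonneg (hp : 0 ≤ p) (hl : 0 ≤ l) (hx : 0 ≤ x) :
    0 ≤ perspectiveGain p l x :=
  mul_nonneg hl (powerGain_nonneg hp (by positivity))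

theorem perspectiveGain_le_self (hp0 : 0 < p) (hp1 : p ≤ 1) (hl : 0 < l) (hx : 0 ≤ x) :
    perspectiveGain p l x ≤ x :=
  calc l * powerGain p (l⁻¹ * x) ≤ l * (l⁻¹ * x) := by
        gcongr
        exact powerGain_le_self hp0 hp1 (neg_one_lt_zero.le.trans (by positivity))
    _ = x := mul_inv_cancel_left₀ hl.ne' x

theorem perspectiveGain_le_rpow (hp0 : 0 ≤ p) (hp1 : p ≤ 1) (hl : 0 < l) (hx : 0 ≤ x) :
    perspectiveGain p l x ≤ l ^ (1 - p) * (p⁻¹ * x ^ p) :=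
  calc l * powerGain p (l⁻¹ * x) ≤ l * (p⁻¹ * (l⁻¹ * x) ^ p) := by
        gcongr
        exact powerGain_le_rpow hp0 hp1 (by positivity)
    _ = l ^ (1 - p) * (p⁻¹ * x ^ p) := by
        rw [Real.mul_rpow (by positivity) hx, Real.inv_rpow hl.le, Real.rpow_sub hl, Real.rpow_one]
        ring

theorem self_sub_perspectiveGain_le_sq (hp0 : 0 < p) (hp1 : p ≤ 1) (hl : 0 < l) (hx : 0 ≤ x) :
    x - perspectiveGain p l x ≤ l⁻¹ * (p⁻¹ * (1 - p)) * x ^ 2 :=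
  calc x - l * powerGain p (l⁻¹ * x) = l * (l⁻¹ * x - powerGain p (l⁻¹ * x)) := by field_simp
    _ ≤ l * (p⁻¹ * (1 - p) * (l⁻¹ * x) ^ 2) := by
        gcongr
        exact self_sub_powerGain_le_sq hp0 hp1 (neg_one_lt_zero.trans_le (by positivity))
    _ = l⁻¹ * (p⁻¹ * (1 - p)) * x ^ 2 := by field_simp

theorem tendsto_perspectiveGain_zero (hp0 : 0 ≤ p) (hp1 : p < 1) (hx : 0 ≤ x) :
    Tendsto (fun l => perspectiveGain p l x) (𝓝[>] 0) (𝓝 0) := by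
  have rpow_tendsto : Tendsto (fun l : ℝ => l ^ (1 - p)) (𝓝[>] 0) (𝓝 0) := by
    have h := (Real.continuousAt_rpow_const 0 (1 - p) (.inr (sub_nonneg.2 hp1.le))).tendsto
    rw [Real.zero_rpow (sub_pos.2 hp1).ne'] at h
    exact h.mono_left nhdsWithin_le_nhds
  have bound_tendsto : Tendsto (fun l : ℝ => l ^ (1 - p) * (p⁻¹ * x ^ p)) (𝓝[>] 0) (𝓝 0) := by
    simpa only [zero_mul] using rpow_tendsto.mul_const (p⁻¹ * x ^ p)
  refine squeeze_zero' ?_ ?_ bound_tendsto <;> filter_upwards [self_mem_nhdsWithin] with l hl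
  · exact perspectiveGain_nonneg hp0 (le_of_lt hl) hx
  · exact perspectiveGain_le_rpow hp0 hp1.le hl hx

end PowerGain

section Integral

variable {α : Type*} [MeasurableSpace α] {μ : Measure α}

theorem tendsto_lintegral_of_ae_le_of_ae_tendsto {ι : Type*} {L : Filter ι}
    [L.IsCountablyGenerated] {f : ι → α → ℝ≥0∞} {g : α → ℝ≥0∞}
    (hf : ∀ i, AEMeasurable (f i) μ) (hle : ∀ᶠ i in L, f i ≤ᵐ[μ] g)
    (hlim : ∀ᵐ a ∂μ, Tendsto (fun i => f i a) L (𝓝 (g a))) :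
    Tendsto (fun i => ∫⁻ a, f i a ∂μ) L (𝓝 (∫⁻ a, g a ∂μ)) := by
  rcases L.eq_or_neBot with rfl | _
  · exact tendsto_bot
  refine tendsto_of_le_liminf_of_limsup_le ?_ ?_
  · calc ∫⁻ a, g a ∂μ = ∫⁻ a, liminf (fun i => f i a) L ∂μ :=
          lintegral_congr_ae (hlim.mono fun _ ha => ha.liminf_eq.symm)
      _ ≤ liminf (fun i => ∫⁻ a, f i a ∂μ) L := lintegral_liminf_le' hf
  · exact limsup_le_of_le (by isBoundedDefault) (hle.mono fun _ hi => lintegral_mono_ae hi)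

theorem exists_pos_measure_lt_neg_ne_zero {f : α → ℝ} (h : μ {a | f a < 0} ≠ 0) :
    ∃ ε > 0, μ {a | f a < -ε} ≠ 0 := by
  by_contra! hnull
  refine h (measure_mono_null (fun a ha => ?_) (measure_iUnion_null fun k : ℕ =>
    hnull (1 / ((k : ℝ) + 1)) Nat.one_div_pos_of_nat))
  have ha : f a < 0 := ha
  obtain ⟨k, hk⟩ := exists_nat_one_div_lt (neg_pos.2 ha)
  exact Set.mem_iUnion.2 ⟨k, lt_neg_of_lt_neg hk⟩

variable {p l : ℝ} {f : α → ℝ}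

theorem integrable_perspectiveGain (hp0 : 0 ≤ p) (hp1 : p ≤ 1) (hl : 0 < l)
    (hf : AEMeasurable f μ) (hf0 : 0 ≤ᵐ[μ] f) (hfp : Integrable (fun a => f a ^ p) μ) :
    Integrable (fun a => perspectiveGain p l (f a)) μ := by
  refine ((hfp.const_mul p⁻¹).const_mul (l ^ (1 - p))).mono'
    ((measurable_perspectiveGain p l).comp_aemeasurable hf).aestronglyMeasurable ?_
  filter_upwards [hf0] with a ha
  rw [Real.norm_of_nonneg (perspectiveGain_nonneg hp0 hl.le ha)]
  exact perspectiveGain_le_rpow hp0 hp1 hl ha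

theorem integrable_self_sub_perspectiveGain (hp0 : 0 < p) (hp1 : p ≤ 1) (hl : 0 < l)
    (hf : AEMeasurable f μ) (hf0 : 0 ≤ᵐ[μ] f) (hf2 : Integrable (fun a => f a ^ 2) μ) :
    Integrable (fun a => f a - perspectiveGain p l (f a)) μ := by
  refine (hf2.const_mul (l⁻¹ * (p⁻¹ * (1 - p)))).mono'
    (hf.sub ((measurable_perspectiveGain p l).comp_aemeasurable hf)).aestronglyMeasurable ?_
  filter_upwards [hf0] with a ha
  rw [Real.norm_of_nonneg (sub_nonneg.2 (perspectiveGain_le_self hp0 hp1 hl ha))]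
  exact self_sub_perspectiveGain_le_sq hp0 hp1 hl ha

theorem tendsto_integral_perspectiveGain_zero (hp0 : 0 ≤ p) (hp1 : p < 1)
    (hf : AEMeasurable f μ) (hf0 : 0 ≤ᵐ[μ] f) (hfp : Integrable (fun a => f a ^ p) μ) :
    Tendsto (fun l => ∫ a, perspectiveGain p l (f a) ∂μ) (𝓝[>] 0) (𝓝 0) := by
  suffices Tendsto (fun l => ∫ a, perspectiveGain p l (f a) ∂μ) (𝓝[>] 0) (𝓝 (∫ _, 0 ∂μ)) by
    simpa only [integral_zero] using this
  refine tendsto_integral_filter_of_dominated_convergence (fun a => p⁻¹ * f a ^ p)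
    (.of_forall fun l =>
      ((measurable_perspectiveGain p l).comp_aemeasurable hf).aestronglyMeasurable)
    ?_ (hfp.const_mul p⁻¹) (hf0.mono fun a ha => tendsto_perspectiveGain_zero hp0 hp1 ha)
  filter_upwards [Ioc_mem_nhdsGT zero_lt_one] with l ⟨hl0, hl1⟩
  filter_upwards [hf0] with a ha
  have ha : 0 ≤ f a := ha
  rw [Real.norm_of_nonneg (perspectiveGain_nonneg hp0 hl0.le ha)]
  exact (perspectiveGain_le_rpow hp0 hp1.le hl0 ha).trans
    (mul_le_of_le_one_left (by positivity) (Real.rpow_le_one hl0.le hl1 (sub_nonneg.2 hp1.le)))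

theorem tendsto_lintegral_self_sub_perspectiveGain (hp0 : 0 ≤ p) (hp1 : p < 1)
    (hf : AEMeasurable f μ) (hf0 : 0 ≤ᵐ[μ] f) :
    Tendsto (fun l => ∫⁻ a, ENNReal.ofReal (f a - perspectiveGain p l (f a)) ∂μ) (𝓝[>] 0)
      (𝓝 (∫⁻ a, ENNReal.ofReal (f a) ∂μ)) := by
  refine tendsto_lintegral_of_ae_le_of_ae_tendsto
    (fun l => (hf.sub ((measurable_perspectiveGain p l).comp_aemeasurable hf)).ennreal_ofReal) ?_ ?_
  · filter_upwards [self_mem_nhdsWithin] with l hl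
    filter_upwards [hf0] with a ha
    exact ENNReal.ofReal_le_ofReal (sub_le_self _ (perspectiveGain_nonneg hp0 (le_of_lt hl) ha))
  · filter_upwards [hf0] with a ha
    simpa only [sub_zero] using
      ENNReal.tendsto_ofReal ((tendsto_perspectiveGain_zero hp0 hp1 ha).const_sub (f a))

theorem tendsto_coe_integral_self_sub_perspectiveGain (hp0 : 0 < p) (hp1 : p < 1)
    (hf : AEMeasurable f μ) (hf0 : 0 ≤ᵐ[μ] f) (hf2 : Integrable (fun a => f a ^ 2) μ) :
    Tendsto (fun l => ((∫ a, (f a - perspectiveGain p l (f a)) ∂μ : ℝ) : EReal)) (𝓝[>] 0)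
      (𝓝 ((∫⁻ a, ENNReal.ofReal (f a) ∂μ : ℝ≥0∞) : EReal)) := by
  refine ((continuous_coe_ennreal_ereal.tendsto _).comp
    (tendsto_lintegral_self_sub_perspectiveGain hp0.le hp1 hf hf0)).congr' ?_
  filter_upwards [self_mem_nhdsWithin] with l hl
  have integrand_nonneg : 0 ≤ᵐ[μ] fun a => f a - perspectiveGain p l (f a) :=
    hf0.mono fun a ha => sub_nonneg.2 (perspectiveGain_le_self hp0 hp1.le hl ha)
  rw [Function.comp_apply, ← ofReal_integral_eq_lintegral_ofReal
    (integrable_self_sub_perspectiveGain hp0 hp1.le hl hf hf0 hf2) integrand_nonneg,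
    EReal.coe_ennreal_ofReal, max_eq_left (integral_nonneg_of_ae integrand_nonneg)]

theorem mul_integral_powerGain_sub_indicator {s : Set α} (hs : MeasurableSet s) (hl : l ≠ 0)
    (hsmall : IntegrableOn (fun a => f a - perspectiveGain p l (f a)) s μ)
    (hlarge : IntegrableOn (fun a => perspectiveGain p l (f a)) sᶜ μ) :
    l * ∫ a, (powerGain p (l⁻¹ * f a) - s.indicator (fun a => l⁻¹ * f a) a) ∂μ =
      (∫ a in sᶜ, perspectiveGain p l (f a) ∂μ) -
        ∫ a in s, (f a - perspectiveGain p l (f a)) ∂μ := by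
  have split_integrand (a : α) :
      l * (powerGain p (l⁻¹ * f a) - s.indicator (fun a => l⁻¹ * f a) a) =
        sᶜ.indicator (fun a => perspectiveGain p l (f a)) a -
          s.indicator (fun a => f a - perspectiveGain p l (f a)) a := by
    by_cases ha : a ∈ s <;> simp [ha, perspectiveGain, mul_sub, hl]
  simp_rw [← integral_const_mul, split_integrand]
  rw [integral_sub (hlarge.integrable_indicator hs.compl) (hsmall.integrable_indicator hs),
    integral_indicator hs.compl, integral_indicator hs]

end Integral

section JumpMeasure

variable {E : Type*} [SeminormedAddCommGroup E] [MeasurableSpace E] [OpensMeasurableSpace E]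
  {F : Measure E}

theorem integrableOn_norm_sq_of_lintegral_min_ne_top
    (hF : ∫⁻ u, ENNReal.ofReal (min (‖u‖ ^ 2) 1) ∂F ≠ ⊤) :
    IntegrableOn (fun u => ‖u‖ ^ 2) {u | ‖u‖ ≤ 1} F := by
  have min_integrable : Integrable (fun u => min (‖u‖ ^ 2) 1) F :=
    (lintegral_ofReal_ne_top_iff_integrable (by fun_prop) (.of_forall fun u => by positivity)).1 hF
  exact min_integrable.integrableOn.congr_fun
    (fun u hu => min_eq_left (pow_le_one₀ (norm_nonneg u) hu))
    (measurableSet_le continuous_norm.measurable measurable_const)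

theorem integrableOn_norm_rpow_of_lintegral_ne_top {p : ℝ}
    (hF : ∫⁻ u in {u : E | 1 < ‖u‖}, ENNReal.ofReal (‖u‖ ^ p) ∂F ≠ ⊤) :
    IntegrableOn (fun u => ‖u‖ ^ p) {u | ‖u‖ ≤ 1}ᶜ F := by
  rw [show {u : E | ‖u‖ ≤ 1}ᶜ = {u | 1 < ‖u‖} by ext u; simp]
  exact (lintegral_ofReal_ne_top_iff_integrable
    (continuous_norm.measurable.pow_const p).aestronglyMeasurable
    (.of_forall fun u => by positivity)).1 hF

end JumpMeasure

section InnerProductSpace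

variable {E : Type*} [NormedAddCommGroup E] [InnerProductSpace ℝ E]

theorem inner_map_self_pos_of_isPositive {T : E →ₗ[ℝ] E} (hT : T.IsPositive) {x : E}
    (hx : T x ≠ 0) : 0 < ⟪x, T x⟫ := by
  let B : LinearMap.BilinForm ℝ E := innerₗ E ∘ₗ T
  have B_symm : LinearMap.IsSymm B := ⟨fun y z => by
    simpa [B, real_inner_comm] using hT.isSymmetric y z⟩
  refine (hT.inner_nonneg_right x).lt_of_ne fun hzero => hx ?_
  have mem_ker : x ∈ LinearMap.ker B :=
    (B.apply_apply_same_eq_zero_iff hT.inner_nonneg_left B_symm).1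
      ((real_inner_comm x (T x)).trans hzero.symm)
  exact inner_self_eq_zero.1 (LinearMap.congr_fun mem_ker (T x))

variable [MeasurableSpace E]

/-- The budget-constraint set `C₀` of the jump measure `F`: the strategies whose wealth factor
`1 + ⟪π, u⟫` is almost never negative after a jump. -/
def budgetSet (F : Measure E) : Set E := {π | F {u | 1 + ⟪π, u⟫ < 0} = 0}

variable {F : Measure E} {π : E} {l : ℝ}

theorem inv_smul_mem_budgetSet_iff (hl : 0 < l) :
    l⁻¹ • π ∈ budgetSet F ↔ F {u | ⟪π, u⟫ < -l} = 0 := by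
  have set_eq : {u | 1 + ⟪l⁻¹ • π, u⟫ < 0} = {u | ⟪π, u⟫ < -l} := by
    ext u
    rw [Set.mem_ofPred_eq, Set.mem_ofPred_eq, real_inner_smul_left, ← lt_neg_iff_add_neg',
      inv_mul_lt_iff₀ hl, mul_neg_one]
  rw [budgetSet, Set.mem_ofPred_eq, set_eq]

theorem inv_smul_mem_budgetSet (hπ : ∀ᵐ u ∂F, 0 ≤ ⟪π, u⟫) (hl : 0 < l) :
    l⁻¹ • π ∈ budgetSet F :=
  (inv_smul_mem_budgetSet_iff hl).2
    (measure_mono_null (fun _ hu => not_le_of_gt (lt_trans hu (neg_neg_of_pos hl))) hπ)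

theorem exists_forall_inv_smul_notMem_budgetSet (hπ : F {u | ⟪π, u⟫ < 0} ≠ 0) :
    ∃ l₀ : ℝ, 0 < l₀ ∧ ∀ l : ℝ, 0 < l → l ≤ l₀ → l⁻¹ • π ∉ budgetSet F := by
  obtain ⟨l₀, l₀_pos, hl₀⟩ := exists_pos_measure_lt_neg_ne_zero hπ
  refine ⟨l₀, l₀_pos, fun l hl hle hmem => hl₀ ?_⟩
  exact measure_mono_null (fun _ hu => lt_of_lt_of_le hu (neg_le_neg hle))
    ((inv_smul_mem_budgetSet_iff hl).1 hmem)

variable [OpensMeasurableSpace E]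

theorem integrable_inner_sq (π : E) (hF : Integrable (fun u => ‖u‖ ^ 2) F) :
    Integrable (fun u => ⟪π, u⟫ ^ 2) F := by
  refine (hF.const_mul (‖π‖ ^ 2)).mono' (by fun_prop) (.of_forall fun u => ?_)
  rw [norm_pow, ← mul_pow]
  gcongr
  exact norm_inner_le_norm π u

theorem integrable_inner_rpow {p : ℝ} (hp : 0 ≤ p) (π : E)
    (hF : Integrable (fun u => ‖u‖ ^ p) F) : Integrable (fun u => ⟪π, u⟫ ^ p) F := by
  refine (hF.const_mul (‖π‖ ^ p)).mono' (by fun_prop) (.of_forall fun u => ?_)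
  calc ‖⟪π, u⟫ ^ p‖ ≤ ‖⟪π, u⟫‖ ^ p := Real.abs_rpow_le_abs_rpow _ _
    _ ≤ (‖π‖ * ‖u‖) ^ p := by gcongr; exact norm_inner_le_norm π u
    _ = ‖π‖ ^ p * ‖u‖ ^ p := Real.mul_rpow (norm_nonneg π) (norm_nonneg u)

end InnerProductSpace

section Psi

variable {n : ℕ} {p : ℝ} {F : Measure (EuclideanSpace ℝ (Fin n))} {π : EuclideanSpace ℝ (Fin n)}
  (b : EuclideanSpace ℝ (Fin n)) (c : EuclideanSpace ℝ (Fin n) →ₗ[ℝ] EuclideanSpace ℝ (Fin n))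

theorem psi_of_mem_budgetSet (hπ : π ∈ budgetSet F) :
    psi n p F b c π = ((-⟪π, b⟫ - (p - 1) / 2 * ⟪π, c π⟫ -
      ∫ u, (powerGain p ⟪π, u⟫ - {u | ‖u‖ ≤ 1}.indicator (fun u => ⟪π, u⟫) u) ∂F : ℝ) : EReal) :=
  if_pos hπ

theorem psi_of_notMem_budgetSet (hπ : π ∉ budgetSet F) : psi n p F b c π = ⊤ :=
  if_neg hπ

theorem coe_mul_psi_inv_smul (hp0 : 0 < p) (hp1 : p ≤ 1) (hπ : ∀ᵐ u ∂F, 0 ≤ ⟪π, u⟫)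
    (hsmall : IntegrableOn (fun u => ‖u‖ ^ 2) {u | ‖u‖ ≤ 1} F)
    (hlarge : IntegrableOn (fun u => ‖u‖ ^ p) {u | ‖u‖ ≤ 1}ᶜ F) {l : ℝ} (hl : 0 < l) :
    (l : EReal) * psi n p F b c (l⁻¹ • π) =
      ((∫ u in {u | ‖u‖ ≤ 1}, (⟪π, u⟫ - perspectiveGain p l ⟪π, u⟫) ∂F : ℝ) : EReal) +
        ((-(∫ u in {u | ‖u‖ ≤ 1}ᶜ, perspectiveGain p l ⟪π, u⟫ ∂F) - ⟪π, b⟫ +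
          (1 - p) / 2 * ⟪π, c π⟫ * l⁻¹ : ℝ) : EReal) := by
  have jump_integral := mul_integral_powerGain_sub_indicator (f := fun u => ⟪π, u⟫)
    (measurableSet_le measurable_norm measurable_const) hl.ne'
    (integrable_self_sub_perspectiveGain hp0 hp1 hl (by fun_prop) (ae_restrict_of_ae hπ)
      (integrable_inner_sq π hsmall))
    (integrable_perspectiveGain hp0.le hp1 hl (by fun_prop) (ae_restrict_of_ae hπ)
      (integrable_inner_rpow hp0.le π hlarge))
  rw [psi_of_mem_budgetSet b c (inv_smul_mem_budgetSet hπ hl), ← EReal.coe_mul, ← EReal.coe_add]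
  simp only [map_smul, real_inner_smul_left, real_inner_smul_right]
  rw [mul_sub, jump_integral]
  congr 1
  field_simp
  ring

theorem tendsto_neg_integral_perspectiveGain_sub (hp0 : 0 ≤ p) (hp1 : p < 1)
    (hπ : ∀ᵐ u ∂F, 0 ≤ ⟪π, u⟫)
    (hlarge : IntegrableOn (fun u => ‖u‖ ^ p) {u | ‖u‖ ≤ 1}ᶜ F) :
    Tendsto (fun l => -(∫ u in {u | ‖u‖ ≤ 1}ᶜ, perspectiveGain p l ⟪π, u⟫ ∂F) - ⟪π, b⟫)
      (𝓝[>] 0) (𝓝 (-⟪π, b⟫)) := by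
  simpa only [neg_zero, zero_sub] using (tendsto_integral_perspectiveGain_zero hp0 hp1
    (by fun_prop) (ae_restrict_of_ae hπ)
    (integrable_inner_rpow hp0 π hlarge)).neg.sub_const ⟪π, b⟫

theorem tendsto_mul_psi_of_map_eq_zero (hp0 : 0 < p) (hp1 : p < 1)
    (hπ : ∀ᵐ u ∂F, 0 ≤ ⟪π, u⟫)
    (hsmall : IntegrableOn (fun u => ‖u‖ ^ 2) {u | ‖u‖ ≤ 1} F)
    (hlarge : IntegrableOn (fun u => ‖u‖ ^ p) {u | ‖u‖ ≤ 1}ᶜ F) (hc : c π = 0) :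
    Tendsto (fun l : ℝ => (l : EReal) * psi n p F b c (l⁻¹ • π)) (𝓝[>] 0)
      (𝓝 (((∫⁻ u in {u | ‖u‖ ≤ 1}, ENNReal.ofReal ⟪π, u⟫ ∂F : ℝ≥0∞) : EReal) -
        ((⟪π, b⟫ : ℝ) : EReal))) := by
  have small_jumps := tendsto_coe_integral_self_sub_perspectiveGain hp0 hp1
    (by fun_prop) (ae_restrict_of_ae hπ) (integrable_inner_sq π hsmall)
  have large_jumps := EReal.tendsto_coe.2
    (tendsto_neg_integral_perspectiveGain_sub b hp0.le hp1 hπ hlarge)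
  rw [sub_eq_add_neg, ← EReal.coe_neg]
  refine ((EReal.continuousAt_add (.inr (EReal.coe_ne_bot _)) (.inr (EReal.coe_ne_top _))).tendsto
    |>.comp (small_jumps.prodMk_nhds large_jumps)).congr' ?_
  filter_upwards [self_mem_nhdsWithin] with l hl
  simp [coe_mul_psi_inv_smul b c hp0 hp1.le hπ hsmall hlarge hl, hc]

theorem tendsto_mul_psi_top_of_map_ne_zero (hp0 : 0 < p) (hp1 : p < 1)
    (hπ : ∀ᵐ u ∂F, 0 ≤ ⟪π, u⟫)
    (hsmall : IntegrableOn (fun u => ‖u‖ ^ 2) {u | ‖u‖ ≤ 1} F)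
    (hlarge : IntegrableOn (fun u => ‖u‖ ^ p) {u | ‖u‖ ≤ 1}ᶜ F)
    (hc : c.IsPositive) (hcπ : c π ≠ 0) :
    Tendsto (fun l : ℝ => (l : EReal) * psi n p F b c (l⁻¹ • π)) (𝓝[>] 0) (𝓝 ⊤) := by
  have diffusion_coeff_pos : 0 < (1 - p) / 2 * ⟪π, c π⟫ :=
    mul_pos (half_pos (sub_pos.2 hp1)) (inner_map_self_pos_of_isPositive hc hcπ)
  have lower_bound := (tendsto_neg_integral_perspectiveGain_sub b hp0.le hp1 hπ hlarge).add_atTop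
    (tendsto_inv_nhdsGT_zero.const_mul_atTop diffusion_coeff_pos)
  refine tendsto_nhds_top_mono (EReal.tendsto_coe_nhds_top_iff.2 lower_bound) ?_
  filter_upwards [self_mem_nhdsWithin] with l hl
  rw [coe_mul_psi_inv_smul b c hp0 hp1.le hπ hsmall hlarge hl]
  refine le_add_of_nonneg_left (EReal.coe_nonneg.2 (integral_nonneg_of_ae ?_))
  filter_upwards [ae_restrict_of_ae hπ] with u hu
  exact sub_nonneg.2 (perspectiveGain_le_self hp0 hp1.le hl hu)

theorem tendsto_mul_psi_top_of_measure_neg_ne_zero (hπ : F {u | ⟪π, u⟫ < 0} ≠ 0) :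
    Tendsto (fun l : ℝ => (l : EReal) * psi n p F b c (l⁻¹ • π)) (𝓝[>] 0) (𝓝 ⊤) := by
  obtain ⟨l₀, l₀_pos, notMem⟩ := exists_forall_inv_smul_notMem_budgetSet hπ
  refine tendsto_const_nhds.congr' ?_
  filter_upwards [Ioc_mem_nhdsGT l₀_pos] with l ⟨hl, hle⟩
  rw [psi_of_notMem_budgetSet b c (notMem l hl hle), EReal.coe_mul_top_of_pos hl]

end Psi

/-- Recession-function computation of `ψ` along `π` (direction `+π`).
(a) If `F(Λ₋(π)) = 0` then `λ⁻¹π ∈ C₀` for all `λ > 0`; if moreover `cπ = 0` then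
`λ·ψ(π/λ) → ∫_{|u|≤1} ⟨π,u⟩ dF − ⟨π,b⟩` (a value in `(−∞,+∞]`) as `λ → 0⁺`, while if
`cπ ≠ 0` then `λ·ψ(π/λ) → +∞`.
(b) If `F(Λ₋(π)) > 0` then `π/λ ∉ C₀` (hence `ψ(π/λ) = +∞`) for all small `λ > 0`, and
`λ·ψ(π/λ) → +∞` as `λ → 0⁺`. -/
theorem psi_recession_along_pi
    (n : ℕ) (hn : 1 ≤ n) (p : ℝ) (hp0 : 0 < p) (hp1 : p < 1)
    (F : Measure (EuclideanSpace ℝ (Fin n)))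
    (hF0 : F {(0 : EuclideanSpace ℝ (Fin n))} = 0)
    (hFlevy : ∫⁻ u, ENNReal.ofReal (min (‖u‖ ^ (2 : ℕ)) 1) ∂F ≠ ⊤)
    (hAF : ∫⁻ u in {u : EuclideanSpace ℝ (Fin n) | 1 < ‖u‖}, ENNReal.ofReal (‖u‖ ^ p) ∂F ≠ ⊤)
    (b : EuclideanSpace ℝ (Fin n))
    (c : EuclideanSpace ℝ (Fin n) →ₗ[ℝ] EuclideanSpace ℝ (Fin n))
    (hcsymm : ∀ x y : EuclideanSpace ℝ (Fin n), ⟪c x, y⟫ = ⟪x, c y⟫)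
    (hcpsd : ∀ x : EuclideanSpace ℝ (Fin n), 0 ≤ ⟪x, c x⟫)
    (π : EuclideanSpace ℝ (Fin n)) :
    -- (a)
    (F {u : EuclideanSpace ℝ (Fin n) | ⟪π, u⟫ < 0} = 0 →
      (∀ l : ℝ, 0 < l →
        F {u : EuclideanSpace ℝ (Fin n) | 1 + ⟪l⁻¹ • π, u⟫ < 0} = 0) ∧
      (c π = 0 →
        Filter.Tendsto (fun l : ℝ => (l : EReal) * psi n p F b c (l⁻¹ • π))
          (𝓝[>] (0 : ℝ))
          (𝓝 (((∫⁻ u in {u : EuclideanSpace ℝ (Fin n) | ‖u‖ ≤ 1},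
                  ENNReal.ofReal ⟪π, u⟫ ∂F : ℝ≥0∞) : EReal) - ((⟪π, b⟫ : ℝ) : EReal)))) ∧
      (c π ≠ 0 →
        Filter.Tendsto (fun l : ℝ => (l : EReal) * psi n p F b c (l⁻¹ • π))
          (𝓝[>] (0 : ℝ)) (𝓝 (⊤ : EReal)))) ∧
    -- (b)
    (F {u : EuclideanSpace ℝ (Fin n) | ⟪π, u⟫ < 0} ≠ 0 →
      (∃ l₀ : ℝ, 0 < l₀ ∧ ∀ l : ℝ, 0 < l → l ≤ l₀ →
        F {u : EuclideanSpace ℝ (Fin n) | 1 + ⟪l⁻¹ • π, u⟫ < 0} ≠ 0 ∧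
        psi n p F b c (l⁻¹ • π) = ⊤) ∧
      Filter.Tendsto (fun l : ℝ => (l : EReal) * psi n p F b c (l⁻¹ • π))
        (𝓝[>] (0 : ℝ)) (𝓝 (⊤ : EReal))) := by
  have hsmall := integrableOn_norm_sq_of_lintegral_min_ne_top hFlevy
  have hlarge := integrableOn_norm_rpow_of_lintegral_ne_top hAF
  have hc : c.IsPositive := ⟨hcsymm, fun x => (hcpsd x).trans_eq (hcsymm x x).symm⟩
  refine ⟨fun hπ => ?_, fun hπ => ⟨?_, tendsto_mul_psi_top_of_measure_neg_ne_zero b c hπ⟩⟩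
  · have inner_nonneg : ∀ᵐ u ∂F, 0 ≤ ⟪π, u⟫ := by simpa only [ae_iff, not_le] using hπ
    exact ⟨fun l hl => inv_smul_mem_budgetSet inner_nonneg hl,
      tendsto_mul_psi_of_map_eq_zero b c hp0 hp1 inner_nonneg hsmall hlarge,
      tendsto_mul_psi_top_of_map_ne_zero b c hp0 hp1 inner_nonneg hsmall hlarge hc⟩
  · obtain ⟨l₀, l₀_pos, notMem⟩ := exists_forall_inv_smul_notMem_budgetSet hπ
    exact ⟨l₀, l₀_pos, fun l hl hle =>
      ⟨notMem l hl hle, psi_of_notMem_budgetSet b c (notMem l hl hle)⟩⟩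
end

section
/- The recession cone of ψ satisfies {π ∈ ℝⁿ : ψ0⁺(π) ≤ 0} = {π ∈ ℝⁿ : F(Λ₋(π)) = 0, cπ = 0, and ∫_{|u|≤1} ⟨π,u⟩ F(du) ≤ ⟨π,b⟩} (for π in the right-hand set the integral is well defined in [0,+∞] since ⟨π,u⟩ ≥ 0 for F-a.e. u). -/
open MeasureTheory
open scoped RealInnerProductSpace ENNReal Topology

/-- The recession function `ψ0⁺(π) := sup_{λ>0} ψ(λπ)/λ` of `ψ` (using that `ψ(0) = 0`). -/
noncomputable def psiRec (n : ℕ) (p : ℝ) (F : Measure (EuclideanSpace ℝ (Fin n)))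
    (b : EuclideanSpace ℝ (Fin n))
    (c : EuclideanSpace ℝ (Fin n) →ₗ[ℝ] EuclideanSpace ℝ (Fin n))
    (π : EuclideanSpace ℝ (Fin n)) : EReal :=
  ⨆ l ∈ Set.Ioi (0 : ℝ), ((l⁻¹ : ℝ) : EReal) * psi n p F b c (l • π)

/-! Let `U x = p⁻¹ (1 + x)₊ ^ p - p⁻¹`. For `l > 0` the condition `ψ (l π) / l ≤ 0` says that `l π`
is admissible and that

`l (1-p)/2 ⟨π, c π⟩ + ∫_{|u| ≤ 1} (⟨π, u⟩ - U (l ⟨π, u⟩) / l) dF ≤`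
`⟨π, b⟩ + ∫_{|u| > 1} U (l ⟨π, u⟩) / l dF`.

Admissibility for all `l` means `⟨π, u⟩ ≥ 0` for `F`-a.e. `u`. Then `0 ≤ U (l x) / l ≤ x` for
`x = ⟨π, u⟩`, while the Hölder bound `|U x| ≤ p⁻¹ |x| ^ p` and `p < 1` give `U (l x) / l → 0` as
`l → ∞`. In the limit the first term forces `⟨π, c π⟩ = 0`, the last one disappears, and Fatou's
lemma yields `∫_{|u| ≤ 1} ⟨π, u⟩ dF ≤ ⟨π, b⟩`. Conversely, if `c π = 0`, that bound dominates the
left-hand side for every `l`, and the integral over `|u| > 1` is nonnegative. -/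

section PowerUtility

open Filter

variable {p l x a b : ℝ}

lemma abs_rpow_sub_rpow_le (ha : 0 ≤ a) (hb : 0 ≤ b) (hp0 : 0 ≤ p) (hp1 : p ≤ 1) :
    |a ^ p - b ^ p| ≤ |a - b| ^ p := by
  wlog hba : b ≤ a generalizing a b
  · rw [abs_sub_comm, abs_sub_comm a]
    exact this hb ha (le_of_not_ge hba)
  have hsub := Real.rpow_add_le_add_rpow hb (sub_nonneg.2 hba) hp0 hp1
  rw [add_sub_cancel] at hsub
  rw [abs_of_nonneg (sub_nonneg.2 (Real.rpow_le_rpow hb hba hp0)),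
    abs_of_nonneg (sub_nonneg.2 hba)]
  linarith

lemma one_add_mul_self_le_rpow_one_add_of_nonpos (hx : -1 < x) (hp : p ≤ 0) :
    1 + p * x ≤ (1 + x) ^ p := by
  have hx' : 0 < 1 + x := by linarith
  have hlog : Real.log (1 + x) ≤ x := by linarith [Real.log_le_sub_one_of_pos hx']
  calc 1 + p * x ≤ Real.log (1 + x) * p + 1 := by nlinarith
    _ ≤ Real.exp (Real.log (1 + x) * p) := Real.add_one_le_exp _
    _ = (1 + x) ^ p := (Real.rpow_def_of_pos hx' p).symm

lemma one_add_mul_sub_mul_sq_le_rpow_one_add (hp1 : p ≤ 1) (hx : -1 ≤ x) :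
    1 + p * x - (1 - p) * x ^ 2 ≤ (1 + x) ^ p := by
  obtain rfl | hx := hx.eq_or_lt
  · norm_num [Real.zero_rpow_nonneg]
  have hx' : 0 < 1 + x := by linarith
  calc 1 + p * x - (1 - p) * x ^ 2 = (1 + (p - 1) * x) * (1 + x) := by ring
    _ ≤ (1 + x) ^ (p - 1) * (1 + x) :=
      mul_le_mul_of_nonneg_right
        (one_add_mul_self_le_rpow_one_add_of_nonpos hx (sub_nonpos.2 hp1)) hx'.le
    _ = (1 + x) ^ p := by rw [← Real.rpow_add_one hx'.ne', sub_add_cancel]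

/-- The gain in the power utility `w ↦ p⁻¹ * (w₊) ^ p` when unit wealth changes by `x`: the jump
integrand of `psi` before compensation. -/
noncomputable def powerUtilityGain (p x : ℝ) : ℝ :=
  p⁻¹ * (max (1 + x) 0) ^ p - p⁻¹

lemma continuous_powerUtilityGain (hp0 : 0 ≤ p) : Continuous (powerUtilityGain p) := by
  unfold powerUtilityGain
  exact ((Continuous.rpow_const (by fun_prop) fun _ ↦ Or.inr hp0).const_mul _).sub
    continuous_const

lemma powerUtilityGain_nonneg (hp0 : 0 ≤ p) (hx : 0 ≤ x) : 0 ≤ powerUtilityGain p x := by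
  have hone : 1 ≤ (max (1 + x) 0) ^ p :=
    Real.one_le_rpow (le_max_of_le_left (by linarith)) hp0
  exact sub_nonneg.2 (le_mul_of_one_le_right (inv_nonneg.2 hp0) hone)

lemma powerUtilityGain_le_self (hp0 : 0 < p) (hp1 : p ≤ 1) (hx : -1 ≤ x) :
    powerUtilityGain p x ≤ x := by
  have hbernoulli := rpow_one_add_le_one_add_mul_self hx hp0.le hp1
  rw [powerUtilityGain, max_eq_left (by linarith), sub_le_iff_le_add, inv_mul_le_iff₀ hp0,
    mul_add, mul_inv_cancel₀ hp0.ne']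
  linarith

lemma abs_powerUtilityGain_le (hp0 : 0 ≤ p) (hp1 : p ≤ 1) :
    |powerUtilityGain p x| ≤ p⁻¹ * |x| ^ p := by
  have hpos_part : |max (1 + x) 0 - 1| ≤ |x| := by
    simpa using abs_max_sub_max_le_abs (1 + x) 1 0
  have hholder : |(max (1 + x) 0) ^ p - 1| ≤ |x| ^ p := by
    simpa using (abs_rpow_sub_rpow_le (le_max_right (1 + x) 0) zero_le_one hp0 hp1).trans
      (Real.rpow_le_rpow (abs_nonneg _) hpos_part hp0)
  calc |powerUtilityGain p x| = p⁻¹ * |(max (1 + x) 0) ^ p - 1| := by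
        rw [powerUtilityGain, ← mul_sub_one, abs_mul, abs_of_nonneg (inv_nonneg.2 hp0)]
    _ ≤ p⁻¹ * |x| ^ p := mul_le_mul_of_nonneg_left hholder (inv_nonneg.2 hp0)

lemma abs_self_sub_powerUtilityGain_le (hp0 : 0 < p) (hp1 : p ≤ 1) :
    |x - powerUtilityGain p x| ≤ p⁻¹ * x ^ 2 := by
  have hinv : 1 ≤ p⁻¹ := (one_le_inv₀ hp0).2 hp1
  obtain hx | hx := lt_or_ge x (-1)
  · rw [powerUtilityGain, max_eq_right (by linarith), Real.zero_rpow hp0.ne', mul_zero,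
      zero_sub, sub_neg_eq_add, abs_le]
    have hsq : 1 ≤ x ^ 2 := by nlinarith
    have hinv_sq : p⁻¹ ≤ p⁻¹ * x ^ 2 := le_mul_of_one_le_right (inv_nonneg.2 hp0.le) hsq
    constructor <;> nlinarith
  · rw [abs_of_nonneg (sub_nonneg.2 (powerUtilityGain_le_self hp0 hp1 hx)), powerUtilityGain,
      max_eq_left (by linarith)]
    have hquad := mul_le_mul_of_nonneg_left
      (one_add_mul_sub_mul_sq_le_rpow_one_add hp1 hx) (inv_nonneg.2 hp0.le)
    have hexpand : p⁻¹ * (1 + p * x - (1 - p) * x ^ 2) = p⁻¹ + x - (p⁻¹ - 1) * x ^ 2 := by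
      field_simp
    nlinarith [sq_nonneg x]

/-- The power utility gain along the ray `l ↦ l * x`, per unit of `l`. Its decay as `l → ∞`
governs the recession behaviour of `psi`. -/
noncomputable def gainRate (p l x : ℝ) : ℝ :=
  l⁻¹ * powerUtilityGain p (l * x)

lemma continuous_gainRate (hp0 : 0 ≤ p) : Continuous (gainRate p l) :=
  ((continuous_powerUtilityGain hp0).comp (continuous_const_mul l)).const_mul _

lemma gainRate_nonneg (hp0 : 0 ≤ p) (hl : 0 ≤ l) (hx : 0 ≤ x) : 0 ≤ gainRate p l x :=
  mul_nonneg (inv_nonneg.2 hl) (powerUtilityGain_nonneg hp0 (mul_nonneg hl hx))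

lemma gainRate_le_self (hp0 : 0 < p) (hp1 : p ≤ 1) (hl : 0 < l) (hx : 0 ≤ x) :
    gainRate p l x ≤ x := by
  rw [gainRate, inv_mul_le_iff₀ hl]
  exact powerUtilityGain_le_self hp0 hp1 (by linarith [mul_nonneg hl.le hx])

lemma abs_gainRate_le (hp0 : 0 ≤ p) (hp1 : p ≤ 1) (hl : 0 < l) :
    |gainRate p l x| ≤ l ^ (p - 1) * (p⁻¹ * |x| ^ p) := by
  rw [gainRate, abs_mul, abs_of_pos (inv_pos.2 hl), inv_mul_le_iff₀ hl]
  calc |powerUtilityGain p (l * x)| ≤ p⁻¹ * |l * x| ^ p := abs_powerUtilityGain_le hp0 hp1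
    _ = p⁻¹ * (l ^ (p - 1) * l * |x| ^ p) := by
      rw [abs_mul, abs_of_pos hl, Real.mul_rpow hl.le (abs_nonneg x),
        ← Real.rpow_add_one hl.ne', sub_add_cancel]
    _ = l * (l ^ (p - 1) * (p⁻¹ * |x| ^ p)) := by ring

lemma abs_self_sub_gainRate_le (hp0 : 0 < p) (hp1 : p ≤ 1) (hl : 0 < l) :
    |x - gainRate p l x| ≤ l * p⁻¹ * x ^ 2 := by
  have hfactor : x - gainRate p l x = l⁻¹ * (l * x - powerUtilityGain p (l * x)) := by
    rw [gainRate, mul_sub, inv_mul_cancel_left₀ hl.ne']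
  rw [hfactor, abs_mul, abs_of_pos (inv_pos.2 hl), inv_mul_le_iff₀ hl]
  calc |l * x - powerUtilityGain p (l * x)| ≤ p⁻¹ * (l * x) ^ 2 :=
        abs_self_sub_powerUtilityGain_le hp0 hp1
    _ = l * (l * p⁻¹ * x ^ 2) := by ring

lemma tendsto_rpow_sub_one_atTop (hp1 : p < 1) :
    Tendsto (fun l : ℝ ↦ l ^ (p - 1)) atTop (𝓝 0) := by
  simpa using tendsto_rpow_neg_atTop (sub_pos.2 hp1)

lemma tendsto_gainRate_atTop (hp0 : 0 ≤ p) (hp1 : p < 1) (x : ℝ) :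
    Tendsto (fun l ↦ gainRate p l x) atTop (𝓝 0) := by
  refine squeeze_zero_norm' (a := fun l ↦ l ^ (p - 1) * (p⁻¹ * |x| ^ p)) ?_
    (by simpa using (tendsto_rpow_sub_one_atTop hp1).mul_const (p⁻¹ * |x| ^ p))
  filter_upwards [eventually_gt_atTop 0] with l hl
  exact abs_gainRate_le hp0 hp1.le hl

end PowerUtility

section Measure

open Filter

variable {α : Type*} [MeasurableSpace α] {μ ν : Measure α} {f : α → ℝ} {p l : ℝ}

lemma forall_pos_measure_one_add_mul_neg_eq_zero_iff :
    (∀ l : ℝ, 0 < l → μ {a | 1 + l * f a < 0} = 0) ↔ μ {a | f a < 0} = 0 := by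
  refine ⟨fun hnull ↦ ?_, fun hnull l hl ↦ measure_mono_null (fun a ha ↦ ?_) hnull⟩
  · refine measure_mono_null (fun a ha ↦ ?_)
      (measure_iUnion_null fun k : ℕ ↦ hnull (k + 1) k.cast_add_one_pos)
    obtain ⟨k, hk⟩ := exists_nat_gt (-f a)⁻¹
    have hfa : f a < 0 := ha
    rw [inv_lt_iff_one_lt_mul₀ (neg_pos.2 hfa)] at hk
    refine Set.mem_iUnion.2 ⟨k, ?_⟩
    change 1 + (k + 1) * f a < 0
    linarith
  · have hla : 1 + l * f a < 0 := ha
    exact neg_of_mul_neg_right (by linarith) hl.le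

lemma integral_sub_indicator {s : Set α} (hs : MeasurableSet s) {g : α → ℝ}
    (hfg : IntegrableOn (fun a ↦ f a - g a) s μ) (hg : IntegrableOn g sᶜ μ) :
    ∫ a, (g a - s.indicator f a) ∂μ = (∫ a in sᶜ, g a ∂μ) - ∫ a in s, (f a - g a) ∂μ := by
  have hon : Set.EqOn (fun a ↦ -(f a - g a)) (fun a ↦ g a - s.indicator f a) s := fun a ha ↦ by
    simp only [Set.indicator_of_mem ha, neg_sub]
  have hoff : Set.EqOn g (fun a ↦ g a - s.indicator f a) sᶜ := fun a ha ↦ by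
    simp only [Set.indicator_of_notMem ha, sub_zero]
  have hint := (hfg.neg.congr_fun hon hs).union (hg.congr_fun hoff hs.compl)
  rw [Set.union_compl_self, integrableOn_univ] at hint
  rw [← integral_add_compl hs hint, ← setIntegral_congr_fun hs hon,
    ← setIntegral_congr_fun hs.compl hoff, integral_neg, neg_add_eq_sub]

lemma integral_le_of_coe_lintegral_ofReal_le (hfm : AEStronglyMeasurable f μ) (hf : 0 ≤ᵐ[μ] f)
    {β : ℝ} (hβ : ((∫⁻ a, ENNReal.ofReal (f a) ∂μ : ℝ≥0∞) : EReal) ≤ β) :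
    Integrable f μ ∧ ∫ a, f a ∂μ ≤ β := by
  have hint : Integrable f μ := by
    refine (lintegral_ofReal_ne_top_iff_integrable hfm hf).1 fun htop ↦ ?_
    simp [htop] at hβ
  rw [← ofReal_integral_eq_lintegral_ofReal hint hf, EReal.coe_ennreal_ofReal,
    max_eq_left (integral_nonneg_of_ae hf)] at hβ
  exact ⟨hint, EReal.coe_le_coe_iff.1 hβ⟩

lemma coe_lintegral_ofReal_le_of_tendsto {ι : Type*} {k : Filter ι} [k.NeBot]
    [k.IsCountablyGenerated] {g : ι → α → ℝ} {r : ι → ℝ} {β : ℝ}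
    (hgm : ∀ i, AEMeasurable (g i) μ) (hgf : ∀ᵐ a ∂μ, Tendsto (g · a) k (𝓝 (f a)))
    (hr : Tendsto r k (𝓝 β))
    (hg : ∀ᶠ i in k, Integrable (g i) μ ∧ 0 ≤ᵐ[μ] g i ∧ ∫ a, g i a ∂μ ≤ r i) :
    ((∫⁻ a, ENNReal.ofReal (f a) ∂μ : ℝ≥0∞) : EReal) ≤ β := by
  have hβ : 0 ≤ β := ge_of_tendsto hr <| hg.mono fun i hi ↦
    (integral_nonneg_of_ae hi.2.1).trans hi.2.2
  have hfatou : ∫⁻ a, ENNReal.ofReal (f a) ∂μ ≤ ENNReal.ofReal β := calc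
    _ = ∫⁻ a, k.liminf (fun i ↦ ENNReal.ofReal (g i a)) ∂μ :=
      lintegral_congr_ae <| hgf.mono fun a ha ↦ (ENNReal.tendsto_ofReal ha).liminf_eq.symm
    _ ≤ k.liminf (fun i ↦ ∫⁻ a, ENNReal.ofReal (g i a) ∂μ) :=
      lintegral_liminf_le' fun i ↦ (hgm i).ennreal_ofReal
    _ ≤ k.liminf (fun i ↦ ENNReal.ofReal (r i)) := by
      refine liminf_le_liminf (hg.mono fun i hi ↦ ?_)
      rw [← ofReal_integral_eq_lintegral_ofReal hi.1 hi.2.1]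
      exact ENNReal.ofReal_le_ofReal hi.2.2
    _ = ENNReal.ofReal β := (ENNReal.tendsto_ofReal hr).liminf_eq
  rw [← EReal.coe_ennreal_le_coe_ennreal_iff, EReal.coe_ennreal_ofReal, max_eq_left hβ] at hfatou
  exact hfatou

lemma integrable_gainRate_comp (hp0 : 0 ≤ p) (hp1 : p ≤ 1) (hl : 0 < l)
    (hfm : AEStronglyMeasurable f μ) (hfp : Integrable (fun a ↦ |f a| ^ p) μ) :
    Integrable (fun a ↦ gainRate p l (f a)) μ :=
  ((hfp.const_mul p⁻¹).const_mul (l ^ (p - 1))).mono'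
    ((continuous_gainRate hp0).comp_aestronglyMeasurable hfm)
    (.of_forall fun _ ↦ abs_gainRate_le hp0 hp1 hl)

lemma integrable_self_sub_gainRate_comp (hp0 : 0 < p) (hp1 : p ≤ 1) (hl : 0 < l)
    (hfm : AEStronglyMeasurable f μ) (hf2 : Integrable (fun a ↦ f a ^ 2) μ) :
    Integrable (fun a ↦ f a - gainRate p l (f a)) μ :=
  (hf2.const_mul (l * p⁻¹)).mono'
    (hfm.sub ((continuous_gainRate hp0.le).comp_aestronglyMeasurable hfm))
    (.of_forall fun _ ↦ abs_self_sub_gainRate_le hp0 hp1 hl)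

lemma tendsto_integral_gainRate_atTop (hp0 : 0 ≤ p) (hp1 : p < 1)
    (hfp : Integrable (fun a ↦ |f a| ^ p) μ) :
    Tendsto (fun l ↦ ∫ a, gainRate p l (f a) ∂μ) atTop (𝓝 0) := by
  refine squeeze_zero_norm' (a := fun l ↦ l ^ (p - 1) * ∫ a, p⁻¹ * |f a| ^ p ∂μ) ?_
    (by simpa using (tendsto_rpow_sub_one_atTop hp1).mul_const (∫ a, p⁻¹ * |f a| ^ p ∂μ))
  filter_upwards [eventually_gt_atTop 0] with l hl
  rw [← integral_const_mul]
  exact norm_integral_le_of_norm_le ((hfp.const_mul _).const_mul _)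
    (.of_forall fun _ ↦ abs_gainRate_le hp0 hp1.le hl)

lemma eq_zero_of_forall_pos_mul_le_of_tendsto {κ β : ℝ} {r : ℝ → ℝ} (hκ : 0 ≤ κ)
    (hle : ∀ l : ℝ, 0 < l → l * κ ≤ r l) (hr : Tendsto r atTop (𝓝 β)) : κ = 0 := by
  refine hκ.eq_or_lt.elim Eq.symm fun hpos ↦ absurd hr (not_tendsto_nhds_of_tendsto_atTop ?_ β)
  exact tendsto_atTop_mono' _ ((eventually_gt_atTop 0).mono hle)
    (tendsto_id.atTop_mul_const hpos)

lemma eq_zero_and_coe_lintegral_le_of_forall_pos_le (hp0 : 0 < p) (hp1 : p < 1) {κ β : ℝ}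
    (hκ : 0 ≤ κ) (hfm : AEStronglyMeasurable f μ) (hf : 0 ≤ᵐ[μ] f)
    (hf2 : Integrable (fun a ↦ f a ^ 2) μ) (hfp : Integrable (fun a ↦ |f a| ^ p) ν)
    (hineq : ∀ l : ℝ, 0 < l →
      l * κ + ∫ a, (f a - gainRate p l (f a)) ∂μ ≤ β + ∫ a, gainRate p l (f a) ∂ν) :
    κ = 0 ∧ ((∫⁻ a, ENNReal.ofReal (f a) ∂μ : ℝ≥0∞) : EReal) ≤ β := by
  have hnonneg {l : ℝ} (hl : 0 < l) : 0 ≤ᵐ[μ] fun a ↦ f a - gainRate p l (f a) :=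
    hf.mono fun a ha ↦ sub_nonneg.2 (gainRate_le_self hp0 hp1.le hl ha)
  have hrhs : Tendsto (fun l ↦ β + ∫ a, gainRate p l (f a) ∂ν) atTop (𝓝 β) := by
    simpa using (tendsto_integral_gainRate_atTop hp0.le hp1 hfp).const_add β
  have hκ0 : κ = 0 := eq_zero_of_forall_pos_mul_le_of_tendsto hκ (fun l hl ↦
    (le_add_of_nonneg_right (integral_nonneg_of_ae (hnonneg hl))).trans (hineq l hl)) hrhs
  refine ⟨hκ0, coe_lintegral_ofReal_le_of_tendsto
    (fun l ↦ (hfm.sub ((continuous_gainRate hp0.le).comp_aestronglyMeasurable hfm)).aemeasurable)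
    (.of_forall fun a ↦ by simpa using (tendsto_gainRate_atTop hp0.le hp1 (f a)).const_sub (f a))
    hrhs ?_⟩
  filter_upwards [eventually_gt_atTop 0] with l hl
  exact ⟨integrable_self_sub_gainRate_comp hp0 hp1.le hl hfm hf2, hnonneg hl,
    by simpa [hκ0] using hineq l hl⟩

lemma integral_self_sub_gainRate_le (hp0 : 0 < p) (hp1 : p ≤ 1) (hl : 0 < l)
    (hf : 0 ≤ᵐ[μ] f) (hint : Integrable f μ) :
    ∫ a, (f a - gainRate p l (f a)) ∂μ ≤ ∫ a, f a ∂μ :=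
  integral_mono_of_nonneg (hf.mono fun _ ha ↦ sub_nonneg.2 (gainRate_le_self hp0 hp1 hl ha)) hint
    (hf.mono fun _ ha ↦ sub_le_self _ (gainRate_nonneg hp0.le hl.le ha))

lemma forall_pos_mul_add_integral_le_iff (hp0 : 0 < p) (hp1 : p < 1) {κ β : ℝ} (hκ : 0 ≤ κ)
    (hfm : AEStronglyMeasurable f μ) (hf : 0 ≤ᵐ[μ] f) (hfν : 0 ≤ᵐ[ν] f)
    (hf2 : Integrable (fun a ↦ f a ^ 2) μ) (hfp : Integrable (fun a ↦ |f a| ^ p) ν) :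
    (∀ l : ℝ, 0 < l →
      l * κ + ∫ a, (f a - gainRate p l (f a)) ∂μ ≤ β + ∫ a, gainRate p l (f a) ∂ν) ↔
    κ = 0 ∧ ((∫⁻ a, ENNReal.ofReal (f a) ∂μ : ℝ≥0∞) : EReal) ≤ β := by
  refine ⟨eq_zero_and_coe_lintegral_le_of_forall_pos_le hp0 hp1 hκ hfm hf hf2 hfp, ?_⟩
  rintro ⟨rfl, hβ⟩ l hl
  obtain ⟨hint, hle⟩ := integral_le_of_coe_lintegral_ofReal_le hfm hf hβ
  have hgain : 0 ≤ ∫ a, gainRate p l (f a) ∂ν :=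
    integral_nonneg_of_ae (hfν.mono fun a ha ↦ gainRate_nonneg hp0.le hl.le ha)
  linarith [integral_self_sub_gainRate_le hp0 hp1.le hl hf hint]

end Measure

section InnerProductSpace

variable {E : Type*} [NormedAddCommGroup E] [InnerProductSpace ℝ E]

lemma inner_map_self_eq_zero_iff_of_isPositive {T : E →ₗ[ℝ] E} (hT : T.IsPositive) {x : E} :
    ⟪x, T x⟫ = 0 ↔ T x = 0 := by
  have hform := LinearMap.BilinForm.apply_apply_same_eq_zero_iff (innerₗ E ∘ₗ T)
    (x := x) (fun y ↦ hT.inner_nonneg_left y) ⟨fun y z ↦ ?_⟩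
  · rw [real_inner_comm]
    refine hform.trans ⟨fun hker ↦ ?_, fun hx ↦ ?_⟩
    · exact inner_self_eq_zero.1 (LinearMap.congr_fun hker (T x))
    · simp [hx]
  · simpa [real_inner_comm] using hT.isSymmetric y z

variable [MeasurableSpace E] [OpensMeasurableSpace E] {F : Measure E} {p : ℝ}

lemma integrableOn_inner_sq
    (hF : ∫⁻ u, ENNReal.ofReal (min (‖u‖ ^ (2 : ℕ)) 1) ∂F ≠ ⊤) (π : E) :
    IntegrableOn (fun u ↦ ⟪π, u⟫ ^ 2) {u | ‖u‖ ≤ 1} F := by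
  have hmin : Integrable (fun u : E ↦ min (‖u‖ ^ 2) 1) F :=
    (lintegral_ofReal_ne_top_iff_integrable (Continuous.aestronglyMeasurable (by fun_prop))
      (.of_forall fun u ↦ by positivity)).1 hF
  refine (hmin.const_mul (‖π‖ ^ 2)).integrableOn.mono'
    (Continuous.aestronglyMeasurable (by fun_prop)) ?_
  refine (ae_restrict_iff' (measurableSet_le measurable_norm measurable_const)).2
    (.of_forall fun u (hu : ‖u‖ ≤ 1) ↦ ?_)
  rw [min_eq_left (pow_le_one₀ (norm_nonneg u) hu), norm_pow, ← mul_pow]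
  exact pow_le_pow_left₀ (norm_nonneg _) (norm_inner_le_norm π u) 2

lemma integrableOn_abs_inner_rpow (hp0 : 0 ≤ p)
    (hF : ∫⁻ u in {u : E | 1 < ‖u‖}, ENNReal.ofReal (‖u‖ ^ p) ∂F ≠ ⊤) (π : E) :
    IntegrableOn (fun u ↦ |⟪π, u⟫| ^ p) {u | 1 < ‖u‖} F := by
  have hcont {g : E → ℝ} (hg : Continuous g) : Continuous fun u ↦ g u ^ p :=
    hg.rpow_const fun _ ↦ Or.inr hp0
  have hnorm : IntegrableOn (fun u : E ↦ ‖u‖ ^ p) {u | 1 < ‖u‖} F :=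
    (lintegral_ofReal_ne_top_iff_integrable (hcont continuous_norm).aestronglyMeasurable
      (.of_forall fun u ↦ by positivity)).1 hF
  refine (hnorm.const_mul (‖π‖ ^ p)).mono' (hcont (by fun_prop)).aestronglyMeasurable
    (.of_forall fun u ↦ ?_)
  rw [Real.norm_of_nonneg (by positivity), ← Real.mul_rpow (norm_nonneg _) (norm_nonneg _)]
  exact Real.rpow_le_rpow (abs_nonneg _) (abs_real_inner_le_norm π u) hp0

lemma integral_powerUtilityGain_smul_sub_indicator (hp0 : 0 < p) (hp1 : p ≤ 1)
    (hF2 : ∫⁻ u, ENNReal.ofReal (min (‖u‖ ^ (2 : ℕ)) 1) ∂F ≠ ⊤)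
    (hFp : ∫⁻ u in {u : E | 1 < ‖u‖}, ENNReal.ofReal (‖u‖ ^ p) ∂F ≠ ⊤) (π : E) {l : ℝ}
    (hl : 0 < l) :
    ∫ u, (powerUtilityGain p ⟪l • π, u⟫ -
        Set.indicator {u : E | ‖u‖ ≤ 1} (fun u ↦ ⟪l • π, u⟫) u) ∂F =
      l * ((∫ u in {u | 1 < ‖u‖}, gainRate p l ⟪π, u⟫ ∂F) -
        ∫ u in {u | ‖u‖ ≤ 1}, (⟪π, u⟫ - gainRate p l ⟪π, u⟫) ∂F) := by
  have hball : MeasurableSet {u : E | ‖u‖ ≤ 1} := measurableSet_le measurable_norm measurable_const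
  have hcompl : {u : E | ‖u‖ ≤ 1}ᶜ = {u | 1 < ‖u‖} := by ext; simp
  have hmeas {ν : Measure E} : AEStronglyMeasurable (fun u ↦ ⟪π, u⟫) ν :=
    Continuous.aestronglyMeasurable (by fun_prop)
  have hsmall := integrable_self_sub_gainRate_comp hp0 hp1 hl hmeas
    (integrableOn_inner_sq hF2 π)
  have hlarge := integrable_gainRate_comp hp0.le hp1 hl hmeas
    (integrableOn_abs_inner_rpow hp0.le hFp π)
  have hscale (u : E) : powerUtilityGain p ⟪l • π, u⟫ -
      Set.indicator {u : E | ‖u‖ ≤ 1} (fun u ↦ ⟪l • π, u⟫) u =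
      l * (gainRate p l ⟪π, u⟫ - Set.indicator {u : E | ‖u‖ ≤ 1} (fun u ↦ ⟪π, u⟫) u) := by
    simp only [gainRate, real_inner_smul_left, Set.indicator_const_mul, mul_sub,
      mul_inv_cancel_left₀ hl.ne']
  simp only [hscale, integral_const_mul]
  rw [integral_sub_indicator hball hsmall (by rwa [hcompl]), hcompl]

end InnerProductSpace

section Recession

variable {n : ℕ} {p : ℝ} {F : Measure (EuclideanSpace ℝ (Fin n))}
  (b : EuclideanSpace ℝ (Fin n)) (c : EuclideanSpace ℝ (Fin n) →ₗ[ℝ] EuclideanSpace ℝ (Fin n))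
  (π : EuclideanSpace ℝ (Fin n))

lemma psiRec_nonpos_iff_forall_psi_smul_nonpos :
    psiRec n p F b c π ≤ 0 ↔ ∀ l : ℝ, 0 < l → psi n p F b c (l • π) ≤ 0 := by
  simp only [psiRec, iSup_le_iff, Set.mem_Ioi]
  refine forall₂_congr fun l hl ↦ ?_
  have hinv : (0 : EReal) < (l⁻¹ : ℝ) := EReal.coe_pos.2 (inv_pos.2 hl)
  simp [EReal.mul_nonpos_iff, hinv.le, hinv.not_ge]

lemma psi_smul_nonpos_iff (hp0 : 0 < p) (hp1 : p ≤ 1)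
    (hF2 : ∫⁻ u, ENNReal.ofReal (min (‖u‖ ^ (2 : ℕ)) 1) ∂F ≠ ⊤)
    (hFp : ∫⁻ u in {u : EuclideanSpace ℝ (Fin n) | 1 < ‖u‖}, ENNReal.ofReal (‖u‖ ^ p) ∂F ≠ ⊤)
    {l : ℝ} (hl : 0 < l) :
    psi n p F b c (l • π) ≤ 0 ↔ F {u | 1 + l * ⟪π, u⟫ < 0} = 0 ∧
      l * ((1 - p) / 2 * ⟪π, c π⟫) +
          ∫ u in {u | ‖u‖ ≤ 1}, (⟪π, u⟫ - gainRate p l ⟪π, u⟫) ∂F ≤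
        ⟪π, b⟫ + ∫ u in {u | 1 < ‖u‖}, gainRate p l ⟪π, u⟫ ∂F := by
  have hjump := integral_powerUtilityGain_smul_sub_indicator hp0 hp1 hF2 hFp π hl
  unfold powerUtilityGain at hjump
  rw [psi, hjump]
  simp only [map_smul, real_inner_smul_left, real_inner_smul_right]
  split_ifs with hnull
  · rw [EReal.coe_nonpos, and_iff_right hnull]
    refine Iff.trans ?_ (mul_le_mul_iff_right₀ hl)
    constructor <;> intro hle <;> linarith
  · simp [hnull]

lemma psiRec_nonpos_iff (hp0 : 0 < p) (hp1 : p ≤ 1)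
    (hF2 : ∫⁻ u, ENNReal.ofReal (min (‖u‖ ^ (2 : ℕ)) 1) ∂F ≠ ⊤)
    (hFp : ∫⁻ u in {u : EuclideanSpace ℝ (Fin n) | 1 < ‖u‖}, ENNReal.ofReal (‖u‖ ^ p) ∂F ≠ ⊤) :
    psiRec n p F b c π ≤ 0 ↔ F {u | ⟪π, u⟫ < 0} = 0 ∧ ∀ l : ℝ, 0 < l →
      l * ((1 - p) / 2 * ⟪π, c π⟫) +
          ∫ u in {u | ‖u‖ ≤ 1}, (⟪π, u⟫ - gainRate p l ⟪π, u⟫) ∂F ≤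
        ⟪π, b⟫ + ∫ u in {u | 1 < ‖u‖}, gainRate p l ⟪π, u⟫ ∂F := by
  rw [psiRec_nonpos_iff_forall_psi_smul_nonpos,
    ← forall_pos_measure_one_add_mul_neg_eq_zero_iff, ← forall₂_and]
  exact forall₂_congr fun l hl ↦ psi_smul_nonpos_iff b c π hp0 hp1 hF2 hFp hl

end Recession

/-- The recession cone of `ψ`:
`{π | ψ0⁺(π) ≤ 0} = {π | F(Λ₋(π)) = 0, cπ = 0, ∫_{|u|≤1} ⟨π,u⟩ dF ≤ ⟨π,b⟩}`,
the integral on the right being a well-defined element of `[0,+∞]` (the integrand is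
`F`-a.e. nonnegative there). -/
theorem psi_recession_cone
    (n : ℕ) (hn : 1 ≤ n) (p : ℝ) (hp0 : 0 < p) (hp1 : p < 1)
    (F : Measure (EuclideanSpace ℝ (Fin n)))
    (hF0 : F {(0 : EuclideanSpace ℝ (Fin n))} = 0)
    (hFlevy : ∫⁻ u, ENNReal.ofReal (min (‖u‖ ^ (2 : ℕ)) 1) ∂F ≠ ⊤)
    (hAF : ∫⁻ u in {u : EuclideanSpace ℝ (Fin n) | 1 < ‖u‖}, ENNReal.ofReal (‖u‖ ^ p) ∂F ≠ ⊤)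
    (b : EuclideanSpace ℝ (Fin n))
    (c : EuclideanSpace ℝ (Fin n) →ₗ[ℝ] EuclideanSpace ℝ (Fin n))
    (hcsymm : ∀ x y : EuclideanSpace ℝ (Fin n), ⟪c x, y⟫ = ⟪x, c y⟫)
    (hcpsd : ∀ x : EuclideanSpace ℝ (Fin n), 0 ≤ ⟪x, c x⟫) :
    {π : EuclideanSpace ℝ (Fin n) | psiRec n p F b c π ≤ 0} =
    {π : EuclideanSpace ℝ (Fin n) |
      F {u : EuclideanSpace ℝ (Fin n) | ⟪π, u⟫ < 0} = 0 ∧ c π = 0 ∧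
      ((∫⁻ u in {u : EuclideanSpace ℝ (Fin n) | ‖u‖ ≤ 1},
          ENNReal.ofReal ⟪π, u⟫ ∂F : ℝ≥0∞) : EReal) ≤ ((⟪π, b⟫ : ℝ) : EReal)} := by
  ext π
  refine (psiRec_nonpos_iff b c π hp0 hp1.le hFlevy hAF).trans (and_congr_right fun hneg ↦ ?_)
  have hnonneg : ∀ᵐ u ∂F, 0 ≤ ⟪π, u⟫ := by simpa [ae_iff] using hneg
  have hcoef : 0 < (1 - p) / 2 := by linarith
  have hc : c.IsPositive := ⟨hcsymm, fun x ↦ by simpa [real_inner_comm] using hcpsd x⟩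
  rw [forall_pos_mul_add_integral_le_iff hp0 hp1 (mul_nonneg hcoef.le (hcpsd π))
    (Continuous.aestronglyMeasurable (by fun_prop)) (ae_restrict_of_ae hnonneg)
    (ae_restrict_of_ae hnonneg) (integrableOn_inner_sq hFlevy π)
    (integrableOn_abs_inner_rpow hp0.le hAF π), mul_eq_zero_iff_left hcoef.ne',
    inner_map_self_eq_zero_iff_of_isPositive hc]
end
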